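/- Let f: ℝ^d → ℝ be differentiable with a global minimizer x*, let (g(x))_{x∈ℝ^d} be a stochastic gradient family for f, and suppose (f, (g(x))) is L-λ(σ²) smooth for some L > 0, λ ≥ 0, σ² ≥ 0. Let σ_v² := inf_{x∈ℝ^d} E‖g(x) − ∇f(x)‖². Then for every x ∈ ℝ^d: f(x) − f(x*) ≥ (‖∇f(x)‖² − λ‖x − x*‖² − (σ² − σ_v²)) / (2L). -/

import Mathlib

open MeasureTheory RealInnerProductSpace

/-! The identity `E‖X‖² = ‖E X‖² + E‖X - E X‖²` splits the second moment of the stochastic gradient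
at `x` into `‖∇f x‖²` and a noise term that is at least `σ_v²`, so the smoothness bound on the
second moment also bounds `‖∇f x‖² + σ_v²`. -/

section TotalVariance

variable {Ω E : Type*} [MeasurableSpace Ω] {μ : Measure Ω} [NormedAddCommGroup E]

/-- The total variance `E‖X - E X‖²` of a random vector `X`: the scalar measure of its noise, equal
to the trace of its covariance when `X` is square-integrable. -/
noncomputable def totalVariance [NormedSpace ℝ E] (X : Ω → E) (μ : Measure Ω) : ℝ :=
  ∫ ω, ‖X ω - ∫ ω', X ω' ∂μ‖ ^ 2 ∂μ

theorem totalVariance_nonneg [NormedSpace ℝ E] (X : Ω → E) : 0 ≤ totalVariance X μ :=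
  integral_nonneg fun _ => sq_nonneg _

theorem iInf_totalVariance_le [NormedSpace ℝ E] {ι : Type*} (X : ι → Ω → E) (i : ι) :
    ⨅ j, totalVariance (X j) μ ≤ totalVariance (X i) μ :=
  ciInf_le ⟨0, Set.forall_mem_range.2 fun j => totalVariance_nonneg (X j)⟩ i

variable [InnerProductSpace ℝ E] [CompleteSpace E] [IsProbabilityMeasure μ]

theorem norm_integral_sq_add_totalVariance {X : Ω → E} (hX : MemLp X 2 μ) :
    ‖∫ ω, X ω ∂μ‖ ^ 2 + totalVariance X μ = ∫ ω, ‖X ω‖ ^ 2 ∂μ := by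
  set m := ∫ ω, X ω ∂μ with hm
  have hX_int : Integrable X μ := hX.integrable one_le_two
  have hsq_int : Integrable (fun ω => ‖X ω‖ ^ 2) μ := hX.integrable_norm_pow two_ne_zero
  have hcross_int : Integrable (fun ω => 2 * ⟪m, X ω⟫) μ := (hX_int.const_inner m).const_mul 2
  have hdiff_int : Integrable (fun ω => ‖X ω‖ ^ 2 - 2 * ⟪m, X ω⟫) μ := hsq_int.sub hcross_int
  have hcross : ∫ ω, ⟪m, X ω⟫ ∂μ = ‖m‖ ^ 2 := by
    rw [integral_inner hX_int, ← hm, real_inner_self_eq_norm_sq]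
  rw [← eq_sub_iff_add_eq']
  calc totalVariance X μ
      = ∫ ω, (‖X ω‖ ^ 2 - 2 * ⟪m, X ω⟫ + ‖m‖ ^ 2) ∂μ := by
        simp only [totalVariance, ← hm, norm_sub_sq_real, real_inner_comm m]
    _ = ∫ ω, ‖X ω‖ ^ 2 ∂μ - 2 * ∫ ω, ⟪m, X ω⟫ ∂μ + ‖m‖ ^ 2 := by
        rw [integral_add hdiff_int (integrable_const _), integral_sub hsq_int hcross_int,
          integral_const_mul, integral_const, probReal_univ, one_smul]
    _ = ∫ ω, ‖X ω‖ ^ 2 ∂μ - ‖m‖ ^ 2 := by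
        rw [hcross]
        ring

theorem norm_integral_sq_add_iInf_totalVariance_le {ι : Type*} {X : ι → Ω → E} {i : ι}
    (hX : MemLp (X i) 2 μ) :
    ‖∫ ω, X i ω ∂μ‖ ^ 2 + ⨅ j, totalVariance (X j) μ ≤ ∫ ω, ‖X i ω‖ ^ 2 ∂μ := by
  rw [← norm_integral_sq_add_totalVariance hX]
  gcongr
  exact iInf_totalVariance_le X i

end TotalVariance

theorem stmt5_general {Ω E : Type*} [MeasurableSpace Ω] {μ : Measure Ω} [IsProbabilityMeasure μ]
    [NormedAddCommGroup E] [InnerProductSpace ℝ E] [CompleteSpace E]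
    {f : E → ℝ} {x₀ : E} {G : E → Ω → E} (hG : ∀ x, MemLp (G x) 2 μ) {L lam σ2 : ℝ} (hL : 0 < L)
    (hsmooth : ∀ x, ∫ ω, ‖G x ω‖ ^ 2 ∂μ ≤ 2 * L * (f x - f x₀) + lam * ‖x - x₀‖ ^ 2 + σ2) (x : E) :
    (‖∫ ω, G x ω ∂μ‖ ^ 2 - lam * ‖x - x₀‖ ^ 2 - (σ2 - ⨅ y, totalVariance (G y) μ)) / (2 * L)
      ≤ f x - f x₀ := by
  have hmoment : ‖∫ ω, G x ω ∂μ‖ ^ 2 + ⨅ y, totalVariance (G y) μ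
      ≤ 2 * L * (f x - f x₀) + lam * ‖x - x₀‖ ^ 2 + σ2 :=
    (norm_integral_sq_add_iInf_totalVariance_le (hG x)).trans (hsmooth x)
  rw [div_le_iff₀' (by positivity)]
  linarith

/-- Lemma 5 of the paper.
If `f` is differentiable with global minimizer `x*`, `(G x)_x` is a stochastic gradient
family for `f` (square-integrable, `E[G x] = ∇f x`), and `(f, G)` is `L`-`λ(σ²)` smooth,
i.e. `E‖G x‖² ≤ 2L (f x − f x*) + lam ‖x − x*‖² + σ²` for all `x`, then with
`σ_v² = ⨅ x, E‖G x − ∇f x‖²` we have, for every `x`,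
`f(x) − f(x*) ≥ (‖∇f(x)‖² − lam ‖x − x*‖² − (σ² − σ_v²)) / (2L)`. -/
theorem stmt5 {Ω : Type*} [MeasurableSpace Ω] (μ : Measure Ω) [IsProbabilityMeasure μ]
    {d : ℕ} (f : EuclideanSpace ℝ (Fin d) → ℝ) (hf : Differentiable ℝ f)
    (xstar : EuclideanSpace ℝ (Fin d)) (hmin : ∀ x, f xstar ≤ f x)
    (G : EuclideanSpace ℝ (Fin d) → Ω → EuclideanSpace ℝ (Fin d))
    (hGmeas : ∀ x, Measurable (G x))
    (hGL2 : ∀ x, MemLp (G x) 2 μ)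
    (hGmean : ∀ x, ∫ ω, G x ω ∂μ = gradient f x)
    (L lam σ2 : ℝ) (hL : 0 < L) (hlam : 0 ≤ lam) (hσ2 : 0 ≤ σ2)
    (hsmooth : ∀ x, ∫ ω, ‖G x ω‖ ^ 2 ∂μ
        ≤ 2 * L * (f x - f xstar) + lam * ‖x - xstar‖ ^ 2 + σ2)
    (σv2 : ℝ) (hσv2 : σv2 = ⨅ y, ∫ ω, ‖G y ω - gradient f y‖ ^ 2 ∂μ) :
    ∀ x, (‖gradient f x‖ ^ 2 - lam * ‖x - xstar‖ ^ 2 - (σ2 - σv2)) / (2 * L)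
        ≤ f x - f xstar := by
  subst hσv2
  simpa only [totalVariance, hGmean] using stmt5_general hGL2 hL hsmooth
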